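/- If ξ is an absolutely continuous vector field along γ|[0,s] with ∫_0^s (E−V(γ)) g(Dξ/ds, Dξ/ds) ds < ∞, ξ(0) ∈ T_{γ(0)}V⁻¹(E) and ξ(s) = W, then lim_{s→0⁺} g(∇V(γ(s)), ξ(s)) g(γ̇(s), ξ(s)) = 0. -/

import Mathlib

open MeasureTheory Set Matrix Filter Topology

namespace JacobiPaper

noncomputable section

/-- Points/vectors of the ambient space `ℝ^N` in which the manifold `M` is
topologically embedded as an open subset. -/
abbrev Vec (N : ℕ) := Fin N → ℝ

variable {N : ℕ}

/-- The inner product determined by a field of matrices `g` at the point `x`. -/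
def gP (g : Vec N → Matrix (Fin N) (Fin N) ℝ) (x v w : Vec N) : ℝ :=
  ∑ i, ∑ j, g x i j * v i * w j

/-- The Euclidean gradient (the differential, as a vector). -/
def euclGrad (V : Vec N → ℝ) (x : Vec N) : Vec N :=
  fun i => fderiv ℝ V x (Pi.single i 1)

/-- The setting of the paper: a `C³` Riemannian metric `g` on a neighborhood `U` of
the compact sublevel `V⁻¹((-∞,E])`, with `V` of class `C²` there and `E` a regular
value of `V`. -/
structure Setting (N : ℕ) where
  g : Vec N → Matrix (Fin N) (Fin N) ℝ
  V : Vec N → ℝ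
  E : ℝ
  U : Set (Vec N)
  hdim : 1 ≤ N
  hU : IsOpen U
  hsub : {x | V x ≤ E} ⊆ U
  hgC : ∀ i j, ContDiffOn ℝ 3 (fun x => g x i j) U
  hgsymm : ∀ x ∈ U, ∀ i j, g x i j = g x j i
  hgpos : ∀ x ∈ U, ∀ v : Vec N, v ≠ 0 → 0 < gP g x v v
  hVC : ContDiffOn ℝ 2 V U
  hreg : ∀ x, V x = E → euclGrad V x ≠ 0
  hcomp : IsCompact {x : Vec N | V x ≤ E}

namespace Setting

variable (S : Setting N)

/-- The Riemannian inner product `g_x(v,w)`. -/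
def prod (x v w : Vec N) : ℝ := gP S.g x v w

/-- The Riemannian norm `‖v‖_x`. -/
def gnorm (x v : Vec N) : ℝ := Real.sqrt (S.prod x v v)

/-- The gradient of `V` with respect to `g`. -/
def grad (x : Vec N) : Vec N := (S.g x)⁻¹ *ᵥ euclGrad S.V x

/-- Christoffel symbols `Γ^k_{ij}` of the Levi-Civita connection of `g`. -/
def christoffel (x : Vec N) (k i j : Fin N) : ℝ :=
  (1/2) * ∑ l, (S.g x)⁻¹ k l *
    (fderiv ℝ (fun y => S.g y l j) x (Pi.single i 1)
     + fderiv ℝ (fun y => S.g y l i) x (Pi.single j 1)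
     - fderiv ℝ (fun y => S.g y i j) x (Pi.single l 1))

/-- Covariant derivative, along the curve `q` with velocity `q'`, of the vector field
`ξ` whose (pointwise) derivative is `ξ'`. -/
def covD (q q' ξ ξ' : ℝ → Vec N) (s : ℝ) : Vec N :=
  fun k => ξ' s k + ∑ i, ∑ j, S.christoffel (q s) k i j * q' s i * ξ s j

/-- The Riemann curvature tensor `R(u,v)w` of `g` at `x`. -/
def curv (x u v w : Vec N) : Vec N :=
  fun l => ∑ i, ∑ j, ∑ k, u i * v j * w k *
    (fderiv ℝ (fun y => S.christoffel y l j k) x (Pi.single i 1)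
     - fderiv ℝ (fun y => S.christoffel y l i k) x (Pi.single j 1)
     + ∑ m, (S.christoffel x l i m * S.christoffel x m j k
             - S.christoffel x l j m * S.christoffel x m i k))

/-- The Hessian operator of `V` with respect to `g`: `ξ ↦ ∇_ξ ∇V`. -/
def hessV (x ξ : Vec N) : Vec N :=
  fun k => ∑ i, ξ i * (fderiv ℝ (fun y => S.grad y k) x (Pi.single i 1)
    + ∑ j, S.christoffel x k i j * S.grad x j)

/-- The Jacobi-metric geodesic equation (eq. (2.5) of the paper) at the instant `s`,
for a curve `x` with derivative `x'` and second derivative `x''`. -/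
def GeoEqAt (x x' x'' : ℝ → Vec N) (s : ℝ) : Prop :=
  ∀ k, (S.E - S.V (x s)) * S.covD x x' x' x'' s k
    - S.prod (x s) (S.grad (x s)) (x' s) * x' s k
    + (1/2) * S.prod (x s) (x' s) (x' s) * S.grad (x s) k = 0

end Setting

/-- `q` is of class `C²` on `I` with first derivative `q'` and second derivative `q''`. -/
def C2OnWith (q q' q'' : ℝ → Vec N) (I : Set ℝ) : Prop :=
  (∀ t ∈ I, HasDerivWithinAt q (q' t) I t) ∧
  (∀ t ∈ I, HasDerivWithinAt q' (q'' t) I t) ∧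
  ContinuousOn q'' I

/-- `x` belongs to the Sobolev space `H¹([a,b],ℝ^N)`: it is absolutely continuous
(primitive of its a.e. derivative) with square-integrable derivative. -/
def H1On (x : ℝ → Vec N) (a b : ℝ) : Prop :=
  ContinuousOn x (Icc a b) ∧
  IntegrableOn (deriv x) (Icc a b) ∧
  IntegrableOn (fun s => ‖deriv x s‖ ^ 2) (Icc a b) ∧
  ∀ t ∈ Icc a b, x t = x a + ∫ s in a..t, deriv x s

/-- `x` is absolutely continuous on `[a,b]`. -/
def ACOn (x : ℝ → Vec N) (a b : ℝ) : Prop :=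
  ContinuousOn x (Icc a b) ∧
  IntegrableOn (deriv x) (Icc a b) ∧
  ∀ t ∈ Icc a b, x t = x a + ∫ s in a..t, deriv x s

namespace Setting

variable (S : Setting N)

/-- The weak (distributional) form (eq. (2.7)) of the Jacobi geodesic equation on `(a,b)`,
tested against all `ξ ∈ C^∞_0((a,b),ℝ^N)`. -/
def WeakGeo (x : ℝ → Vec N) (a b : ℝ) : Prop :=
  ∀ ξ : ℝ → Vec N, ContDiff ℝ (⊤ : ℕ∞) ξ → tsupport ξ ⊆ Ioo a b →
    (∫ s in a..b,
      ((S.E - S.V (x s)) * S.prod (x s) (deriv x s) (S.covD x (deriv x) ξ (deriv ξ) s)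
        - (1/2) * S.prod (x s) (deriv x s) (deriv x s)
            * S.prod (x s) (S.grad (x s)) (ξ s))) = 0

/-- The space `X_Q`. -/
def InXQ (Q : Vec N) (x : ℝ → Vec N) : Prop :=
  H1On x 0 1 ∧ S.V (x 0) = S.E ∧ (∀ s ∈ Ioc (0:ℝ) 1, S.V (x s) < S.E) ∧ x 1 = Q

/-- The Jacobi length functional `L_V`. -/
def LV (x : ℝ → Vec N) : ℝ :=
  ∫ s in (0:ℝ)..1,
    Real.sqrt ((1/2) * (S.E - S.V (x s)) * S.prod (x s) (deriv x s) (deriv x s))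

/-- The distance `d_V(Q)` from `Q` to the boundary of the potential well. -/
def dV (Q : Vec N) : ℝ := sInf {r | ∃ x, S.InXQ Q x ∧ r = S.LV x}

/-- `γ : [0,a] → M` is a `g_*`-geodesic starting at `V⁻¹(E)`, staying in the potential
well for `s > 0`, parameterized by arc length (`½ g(γ̇,γ̇)(E−V(γ)) ≡ 1`). -/
def IsBdryGeo (γ : ℝ → Vec N) (a : ℝ) : Prop :=
  0 < a ∧
  ContinuousOn γ (Icc 0 a) ∧
  (∀ s ∈ Ioc (0:ℝ) a, ContDiffAt ℝ 2 γ s) ∧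
  S.V (γ 0) = S.E ∧
  (∀ s ∈ Ioc (0:ℝ) a, S.V (γ s) < S.E) ∧
  (∀ s ∈ Ioc (0:ℝ) a, S.GeoEqAt γ (deriv γ) (deriv (deriv γ)) s) ∧
  (∀ s ∈ Ioc (0:ℝ) a, (1/2) * S.prod (γ s) (deriv γ s) (deriv γ s) * (S.E - S.V (γ s)) = 1)

/-- The index form `I_{s₁,s₂}(ξ,η)` along `γ`. -/
def idxForm (γ : ℝ → Vec N) (s₁ s₂ : ℝ) (ξ η : ℝ → Vec N) : ℝ :=
  ∫ u in s₁..s₂,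
    ((S.E - S.V (γ u)) *
        (S.prod (γ u) (S.covD γ (deriv γ) ξ (deriv ξ) u) (S.covD γ (deriv γ) η (deriv η) u)
          + S.prod (γ u) (S.curv (γ u) (deriv γ u) (ξ u) (deriv γ u)) (η u))
      - (S.prod (γ u) (S.grad (γ u)) (ξ u)
            * S.prod (γ u) (deriv γ u) (S.covD γ (deriv γ) η (deriv η) u)
          + S.prod (γ u) (deriv γ u) (S.covD γ (deriv γ) ξ (deriv ξ) u)
            * S.prod (γ u) (S.grad (γ u)) (η u)
          + (1/2) * S.prod (γ u) (S.hessV (γ u) (ξ u)) (η u)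
            * S.prod (γ u) (deriv γ u) (deriv γ u)))

/-- Membership in the space `Y_s^W`: absolutely continuous vector fields along `γ|[0,s]`
with finite weighted norm, with `ξ(0) ∈ T_{γ(0)}V⁻¹(E)` and `ξ(s) = W`. -/
def InY (γ : ℝ → Vec N) (s : ℝ) (W : Vec N) (ξ : ℝ → Vec N) : Prop :=
  ACOn ξ 0 s ∧
  IntegrableOn (fun u => (S.E - S.V (γ u)) *
      S.prod (γ u) (S.covD γ (deriv γ) ξ (deriv ξ) u)
        (S.covD γ (deriv γ) ξ (deriv ξ) u)) (Icc 0 s) ∧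
  S.prod (γ 0) (S.grad (γ 0)) (ξ 0) = 0 ∧
  ξ s = W

/-- The weighted squared norm `⟨ξ,ξ⟩_{0,s}`. -/
def wNormSq (γ : ℝ → Vec N) (s : ℝ) (ξ : ℝ → Vec N) : ℝ :=
  ∫ u in (0:ℝ)..s, (S.E - S.V (γ u)) *
    S.prod (γ u) (S.covD γ (deriv γ) ξ (deriv ξ) u) (S.covD γ (deriv γ) ξ (deriv ξ) u)

/-- The Jacobi field equation (eq. (4.9)) at the instant `u`. -/
def JacobiEqAt (γ ξ : ℝ → Vec N) (u : ℝ) : Prop :=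
  ∀ k, - deriv (fun t => (S.E - S.V (γ t)) * S.covD γ (deriv γ) ξ (deriv ξ) t k) u
      + (S.E - S.V (γ u)) * S.curv (γ u) (deriv γ u) (ξ u) (deriv γ u) k
      + deriv (fun t => S.prod (γ t) (S.grad (γ t)) (ξ t) * deriv γ t k) u
      - S.prod (γ u) (deriv γ u) (S.covD γ (deriv γ) ξ (deriv ξ) u) * S.grad (γ u) k
      - (1/2) * S.prod (γ u) (deriv γ u) (deriv γ u) * S.hessV (γ u) (ξ u) k = 0

/-- `ξ` is a Jacobi field along `γ|[0,s]`: of class `C⁰([0,s]) ∩ C²((0,s])` and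
solving the Jacobi equation on `(0,s]`. -/
def IsJacobi (γ ξ : ℝ → Vec N) (s : ℝ) : Prop :=
  ContinuousOn ξ (Icc 0 s) ∧ (∀ u ∈ Ioc (0:ℝ) s, ContDiffAt ℝ 2 ξ u) ∧
  ∀ u ∈ Ioc (0:ℝ) s, S.JacobiEqAt γ ξ u

/-- The boundary condition (eq. (4.10)): the continuous extension at `s = 0` of
`(E−V(γ))Dξ/ds − g(∇V(γ),ξ)γ̇` is parallel to `∇V(γ(0))`. -/
def BdryCond (γ ξ : ℝ → Vec N) : Prop :=
  ∃ c : ℝ, Tendsto (fun u => (fun k => (S.E - S.V (γ u)) * S.covD γ (deriv γ) ξ (deriv ξ) u k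
      - S.prod (γ u) (S.grad (γ u)) (ξ u) * deriv γ u k))
    (nhdsWithin 0 (Ioi 0)) (nhds (c • S.grad (γ 0)))

end Setting

/-- The family `ξ : Fin n → (ℝ → Vec N)` is linearly independent as fields on `I`. -/
def IndepOn {n : ℕ} (I : Set ℝ) (ξ : Fin n → ℝ → Vec N) : Prop :=
  ∀ c : Fin n → ℝ, (∀ u ∈ I, (∑ i, c i • ξ i) u = 0) → c = 0

/-- The index of the quadratic form `B` on the class `C` of vector fields (regarded as
fields on `I`) is at least `n`. -/
def IndexGe {N : ℕ} (B : (ℝ → Vec N) → ℝ) (C : (ℝ → Vec N) → Prop) (I : Set ℝ) (n : ℕ) : Prop :=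
  ∃ ξ : Fin n → ℝ → Vec N, (∀ i, C (ξ i)) ∧ IndepOn I ξ ∧
    ∀ c : Fin n → ℝ, c ≠ 0 → B (∑ i, c i • ξ i) < 0

/-- The index of the quadratic form `B` on the class `C` equals `n`. -/
def IndexEq {N : ℕ} (B : (ℝ → Vec N) → ℝ) (C : (ℝ → Vec N) → Prop) (I : Set ℝ) (n : ℕ) : Prop :=
  IndexGe B C I n ∧ ¬ IndexGe B C I (n+1)

/-- The nullity of a bilinear form `B` on the class `C` is at least `n`. -/
def NullGe {N : ℕ} (B : (ℝ → Vec N) → (ℝ → Vec N) → ℝ) (C : (ℝ → Vec N) → Prop)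
    (I : Set ℝ) (n : ℕ) : Prop :=
  ∃ ξ : Fin n → ℝ → Vec N, (∀ i, C (ξ i)) ∧ IndepOn I ξ ∧
    ∀ i, ∀ η, C η → B (ξ i) η = 0

/-- The nullity of a bilinear form `B` on the class `C` equals `n`. -/
def NullEq {N : ℕ} (B : (ℝ → Vec N) → (ℝ → Vec N) → ℝ) (C : (ℝ → Vec N) → Prop)
    (I : Set ℝ) (n : ℕ) : Prop :=
  NullGe B C I n ∧ ¬ NullGe B C I (n+1)

namespace Setting

variable (S : Setting N)

/-- `ξ` is a (nontrivial candidate) field realizing conjugacy at `γ(s)`: a Jacobi field in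
`Y_s` satisfying the boundary condition (4.10). -/
def ConjField (γ : ℝ → Vec N) (s : ℝ) (ξ : ℝ → Vec N) : Prop :=
  S.InY γ s 0 ξ ∧ S.IsJacobi γ ξ s ∧ S.BdryCond γ ξ

/-- `γ(s)` is conjugate to `V⁻¹(E)` with multiplicity at least `n`. -/
def MultGe (γ : ℝ → Vec N) (s : ℝ) (n : ℕ) : Prop :=
  ∃ ξ : Fin n → ℝ → Vec N, (∀ i, S.ConjField γ s (ξ i)) ∧ IndepOn (Icc 0 s) ξ

/-- `γ(s)` is conjugate to `V⁻¹(E)`. -/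
def IsConj (γ : ℝ → Vec N) (s : ℝ) : Prop := S.MultGe γ s 1

/-- `γ(s)` is conjugate to `V⁻¹(E)` with multiplicity exactly `n`. -/
def Mult (γ : ℝ → Vec N) (s : ℝ) (n : ℕ) : Prop :=
  S.MultGe γ s n ∧ ¬ S.MultGe γ s (n+1)

end Setting

lemma le_of_deriv_nonneg {F F' : ℝ → ℝ} {r : ℝ} (hF : ContinuousOn F (Icc 0 r))
    (hF' : ∀ t ∈ Ioo 0 r, HasDerivAt F (F' t) t) (h0 : ∀ t ∈ Ioo 0 r, 0 ≤ F' t) :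
    ∀ t ∈ Icc 0 r, F 0 ≤ F t := by
  have hm : MonotoneOn F (Icc 0 r) := by
    refine monotoneOn_of_deriv_nonneg (convex_Icc 0 r) hF ?_ ?_
    · rw [interior_Icc]
      exact fun t ht => (hF' t ht).differentiableAt.differentiableWithinAt
    · rw [interior_Icc]
      exact fun t ht => (hF' t ht).deriv ▸ h0 t ht
  exact fun t ht => hm ⟨le_rfl, ht.1.trans ht.2⟩ ht ht.1

/-- Comparison of increments from a pointwise comparison of derivatives. -/
lemma norm_sub_le_of_deriv_le {N : ℕ} {F F' : ℝ → Vec N} {φ φ' : ℝ → ℝ} {r K : ℝ}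
    (hF : ContinuousOn F (Icc 0 r)) (hF' : ∀ t ∈ Ioo 0 r, HasDerivAt F (F' t) t)
    (hφ : ContinuousOn φ (Icc 0 r)) (hφ' : ∀ t ∈ Ioo 0 r, HasDerivAt φ (φ' t) t)
    (hK : ∀ t ∈ Ioo 0 r, ‖F' t‖ ≤ K * φ' t) (h0 : φ 0 = 0) (hpos : ∀ t ∈ Icc 0 r, 0 ≤ K * φ t) :
    ∀ t ∈ Icc 0 r, ‖F t - F 0‖ ≤ K * φ t := by
  intro t ht
  refine (pi_norm_le_iff_of_nonneg (hpos t ht)).2 fun i => ?_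
  have hFi : ContinuousOn (fun t => F t i) (Icc 0 r) := (continuous_apply i).comp_continuousOn hF
  have hFi' : ∀ t ∈ Ioo 0 r, HasDerivAt (fun t => F t i) (F' t i) t :=
    fun t ht => hasDerivAt_pi.1 (hF' t ht) i
  have hb : ∀ t ∈ Ioo 0 r, |F' t i| ≤ K * φ' t := fun t ht =>
    (norm_le_pi_norm (F' t) i).trans (hK t ht)
  have h1 := le_of_deriv_nonneg ((continuousOn_const.mul hφ).sub hFi)
    (fun t ht => ((hφ' t ht).const_mul K).sub (hFi' t ht))
    (fun t ht => sub_nonneg.2 ((le_abs_self _).trans (hb t ht))) t ht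
  have h2 := le_of_deriv_nonneg ((continuousOn_const.mul hφ).add hFi)
    (fun t ht => ((hφ' t ht).const_mul K).add (hFi' t ht))
    (fun t ht => by linarith [neg_abs_le (F' t i), hb t ht]) t ht
  simp only [Pi.sub_apply, Pi.add_apply, Pi.mul_apply, h0, mul_zero] at h1 h2
  rw [Pi.sub_apply, Real.norm_eq_abs, abs_le]
  constructor <;> linarith

/-- Differential inequality `φ φ' = h`, `φ h' ≥ m - K φ` integrated once. -/
lemma energy_le_of_deriv {φ h h' : ℝ → ℝ} {r m K : ℝ}
    (hφ : ContinuousOn φ (Icc 0 r)) (hh : ContinuousOn h (Icc 0 r))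
    (hφpos : ∀ t ∈ Ioo 0 r, 0 < φ t) (hhpos : ∀ t ∈ Ioo 0 r, 0 ≤ h t)
    (hφ' : ∀ t ∈ Ioo 0 r, HasDerivAt φ (h t / φ t) t)
    (hh' : ∀ t ∈ Ioo 0 r, HasDerivAt h (h' t) t)
    (hφ0 : φ 0 = 0) (hh0 : h 0 = 0)
    (hineq : ∀ t ∈ Ioo 0 r, m - K * φ t ≤ φ t * h' t) :
    ∀ t ∈ Icc 0 r, 2 * m * φ t - K * φ t ^ 2 ≤ h t ^ 2 := by
  intro t ht
  have := le_of_deriv_nonneg (F := fun t => h t ^ 2 - 2 * m * φ t + K * φ t ^ 2)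
    (((hh.pow 2).sub (continuousOn_const.mul hφ)).add (continuousOn_const.mul (hφ.pow 2)))
    (fun t ht => (((hh' t ht).pow 2).sub ((hφ' t ht).const_mul (2 * m))).add
      (((hφ' t ht).pow 2).const_mul K)) (fun t ht => ?_) t ht
  · simp only [hφ0, hh0] at this
    linarith
  · have h1 := hφpos t ht
    have h2 : 0 ≤ 2 * (h t / φ t) * (φ t * h' t - (m - K * φ t)) :=
      mul_nonneg (mul_nonneg zero_le_two (div_nonneg (hhpos t ht) h1.le))
        (sub_nonneg.2 (hineq t ht))
    convert h2 using 1
    field_simp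
    ring

/-- Cauchy–Schwarz with weight `φ`, where `1/φ` is dominated by a derivative. -/
lemma sq_integral_le {φ h h' u B : ℝ → ℝ} {t c : ℝ} (ht : 0 < t) (hc : 0 < c)
    (hh : ContinuousOn h (Icc 0 t)) (hh0 : h 0 = 0) (hht : 0 < h t)
    (hh' : ∀ x ∈ Ioo 0 t, HasDerivAt h (h' x) x)
    (hφpos : ∀ x ∈ Ioo 0 t, 0 < φ x) (hineq : ∀ x ∈ Ioo 0 t, c ≤ φ x * h' x)
    (hu : IntegrableOn u (Ioc 0 t)) (hu0 : ∀ x, 0 ≤ u x) (hB : IntegrableOn B (Ioc 0 t))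
    (huB : ∀ x ∈ Ioo 0 t, φ x * u x ^ 2 ≤ B x) :
    (∫ x in (0:ℝ)..t, u x) ^ 2 ≤ h t / c * ∫ x in (0:ℝ)..t, B x := by
  have hh'nn : ∀ x ∈ Ioo 0 t, 0 ≤ h' x := fun x hx =>
    (pos_of_mul_pos_right (hc.trans_le (hineq x hx)) (hφpos x hx).le).le
  have hh_int := intervalIntegral.integrableOn_deriv_of_nonneg hh hh' hh'nn
  have hh_int' : IntervalIntegrable h' volume 0 t :=
    (intervalIntegrable_iff_integrableOn_Ioc_of_le ht.le).2 hh_int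
  have hu' : IntervalIntegrable u volume 0 t :=
    (intervalIntegrable_iff_integrableOn_Ioc_of_le ht.le).2 hu
  have hB' : IntervalIntegrable B volume 0 t :=
    (intervalIntegrable_iff_integrableOn_Ioc_of_le ht.le).2 hB
  have hP := intervalIntegral.integral_eq_sub_of_hasDerivAt_of_le ht.le hh hh' hh_int'
  rw [hh0, sub_zero] at hP
  set X := ∫ x in (0:ℝ)..t, u x
  set Q := ∫ x in (0:ℝ)..t, B x
  have hX0 : 0 ≤ X := intervalIntegral.integral_nonneg ht.le fun x _ => hu0 x
  have key : ∀ η : ℝ, 0 ≤ η → 2 * η * X ≤ η ^ 2 * (h t / c) + Q := by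
    intro η hη
    have e1 : 2 * η * X = ∫ x in (0:ℝ)..t, 2 * η * u x :=
      (intervalIntegral.integral_const_mul _ _).symm
    have e2 : η ^ 2 * (h t / c) + Q = ∫ x in (0:ℝ)..t, (η ^ 2 / c * h' x + B x) := by
      rw [intervalIntegral.integral_add (hh_int'.const_mul _) hB',
        intervalIntegral.integral_const_mul, hP]
      ring
    rw [e1, e2]
    refine intervalIntegral.integral_mono_on_of_le_Ioo ht.le (hu'.const_mul _)
      ((hh_int'.const_mul _).add hB') fun x hx => ?_
    have h1 := hφpos x hx
    have h2 : 1 / φ x ≤ h' x / c := by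
      rw [div_le_div_iff₀ h1 hc]
      linarith [hineq x hx]
    have h3 := mul_le_mul_of_nonneg_left h2 (sq_nonneg η)
    have h4 : 0 ≤ (η - φ x * u x) ^ 2 / φ x := by positivity
    have h5 : (η - φ x * u x) ^ 2 / φ x = η ^ 2 * (1 / φ x) - 2 * η * u x + φ x * u x ^ 2 := by
      field_simp
      ring
    have h6 : η ^ 2 / c * h' x = η ^ 2 * (h' x / c) := by ring
    linarith [huB x hx]
  have hPc : 0 < h t / c := div_pos hht hc
  have := key (X / (h t / c)) (by positivity)
  have e : 2 * (X / (h t / c)) * X - (X / (h t / c)) ^ 2 * (h t / c) = X ^ 2 / (h t / c) := by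
    field_simp
    ring
  have h7 : X ^ 2 / (h t / c) ≤ Q := by linarith
  rwa [div_le_iff₀' hPc] at h7

lemma abs_dotProduct_le {N : ℕ} (v w : Vec N) : |v ⬝ᵥ w| ≤ N * ‖v‖ * ‖w‖ := by
  calc |v ⬝ᵥ w| ≤ ∑ i, |v i * w i| := Finset.abs_sum_le_sum_abs _ _
    _ ≤ ∑ _i : Fin N, ‖v‖ * ‖w‖ := Finset.sum_le_sum fun i _ => by
        rw [abs_mul]
        exact mul_le_mul (norm_le_pi_norm v i) (norm_le_pi_norm w i) (abs_nonneg _) (norm_nonneg _)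
    _ = N * ‖v‖ * ‖w‖ := by simp [mul_assoc]

lemma fderiv_apply_eq_dotProduct {N : ℕ} (V : Vec N → ℝ) (x v : Vec N) :
    fderiv ℝ V x v = euclGrad V x ⬝ᵥ v := by
  conv_lhs => rw [← Finset.univ_sum_single v]
  rw [map_sum]
  refine Finset.sum_congr rfl fun i _ => ?_
  have : (Pi.single i (v i) : Vec N) = v i • Pi.single i (1 : ℝ) := by
    rw [← Pi.single_smul, smul_eq_mul, mul_one]
  rw [this, map_smul, smul_eq_mul, mul_comm, euclGrad]

namespace Setting

variable (S : Setting N)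

lemma prod_eq_dotProduct (x v w : Vec N) : S.prod x v w = v ⬝ᵥ S.g x *ᵥ w := by
  simp only [prod, gP, dotProduct, mulVec, Finset.mul_sum]
  exact Finset.sum_congr rfl fun i _ => Finset.sum_congr rfl fun j _ => by ring

lemma prod_comm {x : Vec N} (hx : x ∈ S.U) (v w : Vec N) : S.prod x v w = S.prod x w v := by
  simp only [prod, gP]
  rw [Finset.sum_comm]
  exact Finset.sum_congr rfl fun i _ => Finset.sum_congr rfl fun j _ => by
    rw [S.hgsymm x hx j i]; ring

lemma prod_self_nonneg {x : Vec N} (hx : x ∈ S.U) (v : Vec N) : 0 ≤ S.prod x v v := by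
  by_cases hv : v = 0
  · simp [hv, prod_eq_dotProduct]
  · exact (S.hgpos x hx v hv).le

lemma prod_add_smul_left (x v w z : Vec N) (r : ℝ) :
    S.prod x (v + r • w) z = S.prod x v z + r * S.prod x w z := by
  simp [prod_eq_dotProduct]

lemma prod_add_smul_self {x : Vec N} (hx : x ∈ S.U) (v w : Vec N) (r : ℝ) :
    S.prod x (v + r • w) (v + r • w) =
      S.prod x w w * (r * r) + 2 * S.prod x v w * r + S.prod x v v := by
  rw [prod_add_smul_left, S.prod_comm hx v, S.prod_comm hx w, prod_add_smul_left,
    prod_add_smul_left, S.prod_comm hx w v]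
  ring

lemma prod_sq_le {x : Vec N} (hx : x ∈ S.U) (v w : Vec N) :
    S.prod x v w ^ 2 ≤ S.prod x v v * S.prod x w w := by
  have := discrim_le_zero fun r => by
    rw [← S.prod_add_smul_self hx v w r]
    exact S.prod_self_nonneg hx _
  rw [discrim] at this
  linarith

lemma det_ne_zero {x : Vec N} (hx : x ∈ S.U) : (S.g x).det ≠ 0 := by
  intro h
  obtain ⟨v, hv, hv0⟩ := Matrix.exists_mulVec_eq_zero_iff.2 h
  have := S.hgpos x hx v hv
  have e := S.prod_eq_dotProduct x v v
  rw [hv0, dotProduct_zero, prod] at e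
  exact this.ne' e

lemma prod_grad {x : Vec N} (hx : x ∈ S.U) (w : Vec N) :
    S.prod x (S.grad x) w = euclGrad S.V x ⬝ᵥ w := by
  rw [S.prod_comm hx, prod_eq_dotProduct, grad, mulVec_mulVec,
    mul_nonsing_inv _ (isUnit_iff_ne_zero.2 (S.det_ne_zero hx)), one_mulVec, dotProduct_comm]

lemma contDiffAt_g {x : Vec N} (hx : x ∈ S.U) (i j : Fin N) :
    ContDiffAt ℝ 3 (fun y => S.g y i j) x :=
  (S.hgC i j).contDiffAt (S.hU.mem_nhds hx)

lemma contDiffAt_V {x : Vec N} (hx : x ∈ S.U) : ContDiffAt ℝ 2 S.V x :=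
  S.hVC.contDiffAt (S.hU.mem_nhds hx)

lemma contDiffAt_euclGrad {x : Vec N} (hx : x ∈ S.U) : ContDiffAt ℝ 1 (euclGrad S.V) x := by
  refine contDiffAt_pi.2 fun i => ?_
  exact ((S.contDiffAt_V hx).fderiv_right (m := 1) (by norm_num)).clm_apply contDiffAt_const

lemma contDiffAt_inv {x : Vec N} (hx : x ∈ S.U) (i j : Fin N) :
    ContDiffAt ℝ 1 (fun y => (S.g y)⁻¹ i j) x := by
  have hdet : ∀ A : Vec N → Matrix (Fin N) (Fin N) ℝ,
      (∀ i j, ContDiffAt ℝ 1 (fun y => A y i j) x) → ContDiffAt ℝ 1 (fun y => (A y).det) x := by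
    intro A hA
    simp only [Matrix.det_apply']
    exact ContDiffAt.sum fun σ _ => contDiffAt_const.mul (contDiffAt_prod fun k _ => hA _ _)
  have hg : ∀ i j, ContDiffAt ℝ 1 (fun y => S.g y i j) x :=
    fun i j => (S.contDiffAt_g hx i j).of_le (by norm_num)
  simp only [Matrix.inv_def, Ring.inverse_eq_inv', Matrix.smul_apply, smul_eq_mul,
    Matrix.adjugate_apply]
  refine ((hdet _ hg).inv (S.det_ne_zero hx)).mul (hdet _ fun k l => ?_)
  by_cases h : k = j
  · subst h
    simpa using contDiffAt_const
  · simpa [Matrix.updateRow_ne h] using hg k l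

lemma contDiffAt_grad {x : Vec N} (hx : x ∈ S.U) : ContDiffAt ℝ 1 S.grad x := by
  refine contDiffAt_pi.2 fun k => ?_
  simp only [grad, mulVec, dotProduct]
  exact ContDiffAt.sum fun j _ => (S.contDiffAt_inv hx k j).mul (contDiffAt_pi.1 (S.contDiffAt_euclGrad hx) j)

lemma continuousAt_christoffel {x : Vec N} (hx : x ∈ S.U) (k i j : Fin N) :
    ContinuousAt (fun y => S.christoffel y k i j) x := by
  have h : ∀ i j l, ContinuousAt
      (fun y => fderiv ℝ (fun z => S.g z i j) y (Pi.single l (1 : ℝ))) x := fun i j l =>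
    (((S.contDiffAt_g hx i j).fderiv_right (m := 2) (by norm_num)).clm_apply
      contDiffAt_const).continuousAt
  simp only [christoffel]
  refine continuousAt_const.mul (tendsto_finsetSum _ fun l _ => ?_)
  exact (S.contDiffAt_inv hx k l).continuousAt.mul (((h _ _ _).add (h _ _ _)).sub (h _ _ _))

lemma eventually_norm_sq_le_prod {x : Vec N} (hx : x ∈ S.U) :
    ∃ C, 0 < C ∧ ∀ᶠ y in 𝓝 x, ∀ v, ‖v‖ ^ 2 ≤ C * S.prod y v v := by
  have hg : ∀ i j, ContinuousAt (fun y => S.g y i j) x :=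
    fun i j => (S.contDiffAt_g hx i j).continuousAt
  have hcont : ∀ v, ContinuousAt (fun z : Vec N × Vec N => S.prod z.1 z.2 z.2) (x, v) := by
    intro v
    simp only [prod, gP]
    refine tendsto_finsetSum _ fun i _ => tendsto_finsetSum _ fun j _ => ?_
    refine Tendsto.mul (Tendsto.mul ?_ ?_) ?_
    · exact ContinuousAt.comp (f := Prod.fst) (g := fun y => S.g y i j) (hg i j) continuousAt_fst
    · exact ((continuous_apply i).comp continuous_snd).continuousAt
    · exact ((continuous_apply j).comp continuous_snd).continuousAt
  have hK : IsCompact (Metric.sphere (0 : Vec N) 1) := isCompact_sphere 0 1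
  have hc : ∃ c, 0 < c ∧ ∀ v ∈ Metric.sphere (0 : Vec N) 1, c < S.prod x v v := by
    rcases (Metric.sphere (0 : Vec N) 1).eq_empty_or_nonempty with h | h
    · exact ⟨1, one_pos, by simp [h]⟩
    · obtain ⟨w, hw, hmin⟩ := hK.exists_isMinOn h (f := fun v => S.prod x v v)
        (fun v _ => ((hcont v).comp (f := fun v => (x, v))
          (by fun_prop)).continuousWithinAt)
      have hw0 : 0 < S.prod x w w := S.hgpos x hx w (by
        rintro rfl
        simp at hw)
      exact ⟨S.prod x w w / 2, half_pos hw0, fun v hv => (half_lt_self hw0).trans_le (hmin hv)⟩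
  obtain ⟨c, hc0, hc⟩ := hc
  have hev : ∀ᶠ y in 𝓝 x, ∀ v ∈ Metric.sphere (0 : Vec N) 1, c < S.prod y v v :=
    hK.eventually_forall_of_forall_eventually fun v hv => by
      exact (hcont v).eventually_const_lt (hc v hv)
  refine ⟨1 / c, by positivity, hev.mono fun y hy v => ?_⟩
  by_cases hv : v = 0
  · simp [hv, prod_eq_dotProduct]
  have hn : 0 < ‖v‖ := norm_pos_iff.2 hv
  have h1 := hy (‖v‖⁻¹ • v) (by simp [norm_smul, hn.ne'])
  rw [prod_eq_dotProduct] at h1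
  simp only [mulVec_smul, dotProduct_smul, smul_dotProduct, smul_eq_mul] at h1
  rw [← prod_eq_dotProduct, ← mul_assoc, ← mul_inv, inv_mul_eq_div, lt_div_iff₀ (by positivity)] at h1
  rw [one_div, inv_mul_eq_div, le_div_iff₀ hc0]
  linarith

end Setting

lemma hasDerivAt_dotProduct {N : ℕ} {v w : ℝ → Vec N} {v' w' : Vec N} {t : ℝ}
    (hv : HasDerivAt v v' t) (hw : HasDerivAt w w' t) :
    HasDerivAt (fun u => v u ⬝ᵥ w u) (v' ⬝ᵥ w t + v t ⬝ᵥ w') t := by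
  simp only [dotProduct, ← Finset.sum_add_distrib]
  exact HasDerivAt.fun_sum fun i _ => (hasDerivAt_pi.1 hv i).mul (hasDerivAt_pi.1 hw i)

namespace Setting

variable (S : Setting N)

/-- The quadratic correction `Γ(v,w)` in the covariant derivative. -/
def christoffelVec (x v w : Vec N) : Vec N :=
  fun k => ∑ i, ∑ j, S.christoffel x k i j * v i * w j

lemma covD_eq (q q' ξ ξ' : ℝ → Vec N) (t : ℝ) :
    S.covD q q' ξ ξ' t = ξ' t + S.christoffelVec (q t) (q' t) (ξ t) := rfl

lemma norm_christoffelVec_le {x : Vec N} {C : ℝ} (hC0 : 0 ≤ C)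
    (hC : ∀ k i j, |S.christoffel x k i j| ≤ C) (v w : Vec N) :
    ‖S.christoffelVec x v w‖ ≤ N ^ 2 * C * ‖v‖ * ‖w‖ := by
  refine (pi_norm_le_iff_of_nonneg (by positivity)).2 fun k => ?_
  calc |∑ i, ∑ j, S.christoffel x k i j * v i * w j|
      ≤ ∑ i, ∑ j, |S.christoffel x k i j * v i * w j| :=
        (Finset.abs_sum_le_sum_abs _ _).trans
          (Finset.sum_le_sum fun i _ => Finset.abs_sum_le_sum_abs _ _)
    _ ≤ ∑ _i : Fin N, ∑ _j : Fin N, C * ‖v‖ * ‖w‖ :=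
        Finset.sum_le_sum fun i _ => Finset.sum_le_sum fun j _ => by
          rw [abs_mul, abs_mul]
          exact mul_le_mul (mul_le_mul (hC k i j) (norm_le_pi_norm v i) (abs_nonneg _) hC0)
            (norm_le_pi_norm w j) (abs_nonneg _) (by positivity)
    _ = N ^ 2 * C * ‖v‖ * ‖w‖ := by simp; ring

/-- The squared `g`-norm of the gradient of `V`. -/
def gradSq (x : Vec N) : ℝ := euclGrad S.V x ⬝ᵥ S.grad x

lemma contDiffAt_gradSq {x : Vec N} (hx : x ∈ S.U) : ContDiffAt ℝ 1 S.gradSq x := by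
  unfold gradSq dotProduct
  exact ContDiffAt.sum fun i _ => (contDiffAt_pi.1 (S.contDiffAt_euclGrad hx) i).mul
    (contDiffAt_pi.1 (S.contDiffAt_grad hx) i)

lemma gradSq_pos {x : Vec N} (hx : x ∈ S.U) (h : S.V x = S.E) : 0 < S.gradSq x := by
  rw [gradSq, ← S.prod_grad hx]
  refine S.hgpos x hx _ fun h0 => S.hreg x h ?_
  have : S.g x *ᵥ S.grad x = euclGrad S.V x := by
    rw [grad, mulVec_mulVec, mul_nonsing_inv _ (isUnit_iff_ne_zero.2 (S.det_ne_zero hx)),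
      one_mulVec]
  rw [← this, h0, mulVec_zero]

lemma mem_U_of_le {x : Vec N} (h : S.V x ≤ S.E) : x ∈ S.U := S.hsub h

/-- `(E - V) d/ds (E - V)` along `γ`. -/
def kin (γ : ℝ → Vec N) (t : ℝ) : ℝ :=
  -((S.E - S.V (γ t)) * (euclGrad S.V (γ t) ⬝ᵥ deriv γ t))

lemma hasDerivAt_potential {γ : ℝ → Vec N} {t : ℝ} (hU : γ t ∈ S.U)
    (hγ : DifferentiableAt ℝ γ t) :
    HasDerivAt (fun u => S.E - S.V (γ u)) (-(euclGrad S.V (γ t) ⬝ᵥ deriv γ t)) t := by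
  have h1 := ((S.contDiffAt_V hU).differentiableAt (by norm_num)).hasFDerivAt.comp_hasDerivAt t
    hγ.hasDerivAt
  rw [fderiv_apply_eq_dotProduct] at h1
  exact h1.const_sub S.E

/-- The derivative of `kin` along a solution of the geodesic equation. -/
lemma exists_hasDerivAt_kin {γ : ℝ → Vec N} {t : ℝ} (hU : γ t ∈ S.U) (hγ : ContDiffAt ℝ 2 γ t)
    (hgeo : S.GeoEqAt γ (deriv γ) (deriv (deriv γ)) t)
    (harc : (1/2) * S.prod (γ t) (deriv γ t) (deriv γ t) * (S.E - S.V (γ t)) = 1) :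
    ∃ k', HasDerivAt (S.kin γ) k' t ∧
      (S.E - S.V (γ t)) * k' = S.gradSq (γ t) - (S.E - S.V (γ t)) ^ 2 *
        (fderiv ℝ (euclGrad S.V) (γ t) (deriv γ t) ⬝ᵥ deriv γ t -
          euclGrad S.V (γ t) ⬝ᵥ S.christoffelVec (γ t) (deriv γ t) (deriv γ t)) := by
  have hd : DifferentiableAt ℝ γ t := hγ.differentiableAt (by norm_num)
  have hdd : DifferentiableAt ℝ (deriv γ) t := by
    have : ContDiffAt ℝ 1 (fun u => fderiv ℝ γ u 1) t :=
      (hγ.fderiv_right (m := 1) (by norm_num)).clm_apply contDiffAt_const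
    exact this.differentiableAt (by norm_num)
  have hφ := S.hasDerivAt_potential hU hd
  have hD := ((S.contDiffAt_euclGrad hU).differentiableAt (by norm_num)).hasFDerivAt.comp_hasDerivAt
    t hd.hasDerivAt
  refine ⟨_, (hφ.mul (hasDerivAt_dotProduct hD hdd.hasDerivAt)).neg, ?_⟩
  have hk : (S.E - S.V (γ t)) *
      (euclGrad S.V (γ t) ⬝ᵥ deriv (deriv γ) t +
        euclGrad S.V (γ t) ⬝ᵥ S.christoffelVec (γ t) (deriv γ t) (deriv γ t))
      - (euclGrad S.V (γ t) ⬝ᵥ deriv γ t) * (euclGrad S.V (γ t) ⬝ᵥ deriv γ t)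
      + (1/2) * S.prod (γ t) (deriv γ t) (deriv γ t) * S.gradSq (γ t) = 0 := by
    have : (S.E - S.V (γ t)) • (deriv (deriv γ) t +
          S.christoffelVec (γ t) (deriv γ t) (deriv γ t))
        - (euclGrad S.V (γ t) ⬝ᵥ deriv γ t) • deriv γ t
        + ((1/2) * S.prod (γ t) (deriv γ t) (deriv γ t)) • S.grad (γ t) = 0 := by
      ext k
      have := hgeo k
      rw [S.prod_grad hU, covD_eq] at this
      exact this
    have := congrArg (fun w => euclGrad S.V (γ t) ⬝ᵥ w) this
    simpa only [dotProduct_add, dotProduct_sub, dotProduct_smul, smul_eq_mul, dotProduct_zero, gradSq]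
      using this
  simp only [Function.comp_apply]
  linear_combination (S.E - S.V (γ t)) * hk * (-1) + S.gradSq (γ t) * harc

end Setting

lemma exists_eventually_norm_le {E F : Type*} [TopologicalSpace E] [SeminormedAddCommGroup F]
    {f : E → F} {x : E} (hf : ContinuousAt f x) : ∃ C, 0 ≤ C ∧ ∀ᶠ y in 𝓝 x, ‖f y‖ ≤ C :=
  ⟨‖f x‖ + 1, by positivity, (hf.norm.eventually_lt_const (lt_add_one _)).mono fun _ h => h.le⟩

lemma exists_eventually_norm_sub_le {N : ℕ} {F : Type*} [NormedAddCommGroup F] [NormedSpace ℝ F]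
    {f : Vec N → F} {x : Vec N} (hf : ContDiffAt ℝ 1 f x) :
    ∃ C, 0 ≤ C ∧ ∀ᶠ y in 𝓝 x, ‖f y - f x‖ ≤ C * ‖y - x‖ := by
  obtain ⟨K, t, ht, hK⟩ := hf.exists_lipschitzOnWith
  exact ⟨K, K.2, Filter.mem_of_superset ht fun y hy => hK.norm_sub_le hy (mem_of_mem_nhds ht)⟩

namespace Setting

variable (S : Setting N)

/-- Asymptotic estimates for a boundary geodesic near its starting point. -/
lemma exists_geodesic_estimates {γ : ℝ → Vec N} {a : ℝ} (hγ : S.IsBdryGeo γ a) :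
    ∃ r ∈ Ioc 0 a, ∃ c K : ℝ, 0 < c ∧ 0 ≤ K ∧ ContinuousOn (S.kin γ) (Icc 0 r) ∧
      S.kin γ 0 = 0 ∧ ∀ t ∈ Ioc 0 r, 0 < S.kin γ t ∧
        S.kin γ t ^ 2 ≤ K * (S.E - S.V (γ t)) ∧
        (S.E - S.V (γ t)) * ‖deriv γ t‖ ^ 2 ≤ K ∧
        ‖euclGrad S.V (γ t) - euclGrad S.V (γ 0)‖ ≤ K * (S.E - S.V (γ t)) ∧
        c ≤ S.gradSq (γ t) ∧
        2 * (S.E - S.V (γ t)) * S.gradSq (γ t) - S.kin γ t ^ 2 ≤ K * (S.E - S.V (γ t)) ^ 2 ∧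
        (∃ k', HasDerivAt (S.kin γ) k' t ∧ c ≤ (S.E - S.V (γ t)) * k') ∧
        (∀ v, ‖v‖ ^ 2 ≤ K * S.prod (γ t) v v) ∧
        ∀ v w, ‖S.christoffelVec (γ t) v w‖ ≤ K * ‖v‖ * ‖w‖ := by
  obtain ⟨ha, hcont, hC2, hV0, hVlt, hgeo, harc⟩ := hγ
  have hU : ∀ t ∈ Icc 0 a, γ t ∈ S.U := fun t ht => S.mem_U_of_le <| by
    rcases ht.1.eq_or_lt with rfl | h
    · exact hV0.le
    · exact (hVlt t ⟨h, ht.2⟩).le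
  have h0U : γ 0 ∈ S.U := hU 0 ⟨le_rfl, ha.le⟩
  have hm := S.gradSq_pos h0U hV0
  set m := S.gradSq (γ 0)
  obtain ⟨C1, hC1, P1⟩ := S.eventually_norm_sq_le_prod h0U
  obtain ⟨C2, hC2', P2⟩ := exists_eventually_norm_le (S.contDiffAt_euclGrad h0U).continuousAt
  obtain ⟨C3, hC3, P3⟩ := exists_eventually_norm_le
    ((S.contDiffAt_euclGrad h0U).fderiv_right (m := 0) (by norm_num)).continuousAt
  have hchr : ∃ C4, 0 ≤ C4 ∧ ∀ᶠ x in 𝓝 (γ 0), ∀ k i j, |S.christoffel x k i j| ≤ C4 := by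
    have : ContinuousAt (fun x => fun k i j => S.christoffel x k i j) (γ 0) :=
      continuousAt_pi.2 fun k => continuousAt_pi.2 fun i => continuousAt_pi.2 fun j =>
        S.continuousAt_christoffel h0U k i j
    obtain ⟨C, hC, h⟩ := exists_eventually_norm_le this
    refine ⟨C, hC, h.mono fun x hx k i j => ?_⟩
    exact (norm_le_pi_norm (fun j => S.christoffel x k i j) j).trans
      ((norm_le_pi_norm (fun i j => S.christoffel x k i j) i).trans
      ((norm_le_pi_norm (fun k i j => S.christoffel x k i j) k).trans hx))
  obtain ⟨C4, hC4, P4⟩ := hchr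
  obtain ⟨L1, hL1, P5⟩ := exists_eventually_norm_sub_le (S.contDiffAt_gradSq h0U)
  obtain ⟨L2, hL2, P6⟩ := exists_eventually_norm_sub_le (S.contDiffAt_euclGrad h0U)
  have P7 : ∀ᶠ x in 𝓝 (γ 0), m / 2 < S.gradSq x :=
    (S.contDiffAt_gradSq h0U).continuousAt.eventually_const_lt (half_lt_self hm)
  set K0 := 2 * C1 * (N * C3 + N * C2 * (N ^ 2 * C4)) with hK0
  have hK0' : 0 ≤ K0 := by positivity
  have P8 : ∀ᶠ x in 𝓝 (γ 0), K0 * (S.E - S.V x) < m / 4 := by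
    have : ContinuousAt (fun x => K0 * (S.E - S.V x)) (γ 0) :=
      continuousAt_const.mul (continuousAt_const.sub (S.contDiffAt_V h0U).continuousAt)
    refine this.eventually_lt_const ?_
    simp only [hV0, sub_self, mul_zero]
    positivity
  have hγ0 : Tendsto γ (𝓝[≥] 0) (𝓝 (γ 0)) := by
    have := (hcont 0 ⟨le_rfl, ha.le⟩)
    rwa [ContinuousWithinAt, nhdsWithin_Icc_eq_nhdsGE ha] at this
  have hall := hγ0.eventually (P1.and (P2.and (P3.and (P4.and (P5.and (P6.and (P7.and P8)))))))
  obtain ⟨r0, hr0, hr0'⟩ := (mem_nhdsGE_iff_exists_Icc_subset).1 hall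
  set r := min r0 a
  have hr : 0 < r := lt_min hr0 ha
  have hra : r ≤ a := min_le_right _ _
  have hP : ∀ t ∈ Icc 0 r, _ := fun t ht => hr0' ⟨ht.1, ht.2.trans (min_le_left _ _)⟩
  simp only [Set.mem_ofPred_eq] at hP
  have hIoc : ∀ t ∈ Ioc 0 r, t ∈ Ioc 0 a := fun t ht => ⟨ht.1, ht.2.trans hra⟩
  have hIcc : ∀ t ∈ Ioc 0 r, t ∈ Icc 0 r := fun t ht => ⟨ht.1.le, ht.2⟩
  have hIoo : ∀ t ∈ Ioo 0 r, t ∈ Ioc 0 r := fun t ht => ⟨ht.1, ht.2.le⟩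
  have hUr : ∀ t ∈ Icc 0 r, γ t ∈ S.U := fun t ht => hU t ⟨ht.1, ht.2.trans hra⟩
  have hγr : ContinuousOn γ (Icc 0 r) := hcont.mono (Icc_subset_Icc_right hra)
  set φ : ℝ → ℝ := fun t => S.E - S.V (γ t) with hφ_def
  have hφ0 : φ 0 = 0 := by simp [hφ_def, hV0]
  have hφc : ContinuousOn φ (Icc 0 r) :=
    continuousOn_const.sub (S.hVC.continuousOn.comp hγr hUr)
  have hφpos : ∀ t ∈ Ioc 0 r, 0 < φ t := fun t ht => sub_pos.2 (hVlt t (hIoc t ht))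
  have hd : ∀ t ∈ Ioc 0 r, HasDerivAt γ (deriv γ t) t := fun t ht =>
    ((hC2 t (hIoc t ht)).differentiableAt (by norm_num)).hasDerivAt
  have hkin : ∀ t, S.kin γ t = -(φ t * (euclGrad S.V (γ t) ⬝ᵥ deriv γ t)) := fun t => rfl
  have hφ' : ∀ t ∈ Ioc 0 r, HasDerivAt φ (S.kin γ t / φ t) t := fun t ht => by
    have := S.hasDerivAt_potential (hUr t (hIcc t ht)) (hd t ht).differentiableAt
    convert this using 1
    rw [hkin]
    field_simp [(hφpos t ht).ne']
  have hvel : ∀ t ∈ Ioc 0 r, φ t * ‖deriv γ t‖ ^ 2 ≤ 2 * C1 := fun t ht => by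
    have h1 := (hP t (hIcc t ht)).1 (deriv γ t)
    have h2 := harc t (hIoc t ht)
    have h3 := mul_le_mul_of_nonneg_left h1 (hφpos t ht).le
    have h4 : φ t * (C1 * S.prod (γ t) (deriv γ t) (deriv γ t)) = 2 * C1 := by
      linear_combination 2 * C1 * h2
    linarith
  have hkin0 : S.kin γ 0 = 0 := by rw [hkin, hφ0, zero_mul, neg_zero]
  set Kh := (N * C2) ^ 2 * (2 * C1) with hKh
  have hkinsq : ∀ t ∈ Ioc 0 r, S.kin γ t ^ 2 ≤ Kh * φ t := fun t ht => by
    have h1 := abs_dotProduct_le (euclGrad S.V (γ t)) (deriv γ t)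
    have h2 : |euclGrad S.V (γ t) ⬝ᵥ deriv γ t| ≤ N * C2 * ‖deriv γ t‖ :=
      h1.trans (by gcongr; exact (hP t (hIcc t ht)).2.1)
    have h3 : (euclGrad S.V (γ t) ⬝ᵥ deriv γ t) ^ 2 ≤ (N * C2 * ‖deriv γ t‖) ^ 2 := by
      rw [← sq_abs]
      exact pow_le_pow_left₀ (abs_nonneg _) h2 2
    have hp := hφpos t ht
    calc S.kin γ t ^ 2 = φ t ^ 2 * (euclGrad S.V (γ t) ⬝ᵥ deriv γ t) ^ 2 := by rw [hkin]; ring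
      _ ≤ φ t ^ 2 * (N * C2 * ‖deriv γ t‖) ^ 2 := by gcongr
      _ = (N * C2) ^ 2 * φ t * (φ t * ‖deriv γ t‖ ^ 2) := by ring
      _ ≤ (N * C2) ^ 2 * φ t * (2 * C1) := mul_le_mul_of_nonneg_left (hvel t ht) (by positivity)
      _ = Kh * φ t := by rw [hKh]; ring
  have hexk : ∀ t ∈ Ioc 0 r, ∃ k', HasDerivAt (S.kin γ) k' t ∧
      S.gradSq (γ t) - K0 * φ t ≤ φ t * k' := fun t ht => by
    obtain ⟨k', hk', e⟩ := S.exists_hasDerivAt_kin (hUr t (hIcc t ht)) (hC2 t (hIoc t ht))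
      (hgeo t (hIoc t ht)) (harc t (hIoc t ht))
    refine ⟨k', hk', ?_⟩
    obtain ⟨-, p2, p3, p4, -⟩ := hP t (hIcc t ht)
    have hp := hφpos t ht
    have b1 : |fderiv ℝ (euclGrad S.V) (γ t) (deriv γ t) ⬝ᵥ deriv γ t| ≤
        N * (C3 * ‖deriv γ t‖) * ‖deriv γ t‖ := by
      refine (abs_dotProduct_le _ _).trans ?_
      gcongr
      exact (ContinuousLinearMap.le_opNorm _ _).trans (by gcongr)
    have b2 : |euclGrad S.V (γ t) ⬝ᵥ S.christoffelVec (γ t) (deriv γ t) (deriv γ t)| ≤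
        N * C2 * (N ^ 2 * C4 * ‖deriv γ t‖ * ‖deriv γ t‖) := by
      refine (abs_dotProduct_le _ _).trans ?_
      gcongr
      exact S.norm_christoffelVec_le hC4 p4 _ _
    set A := fderiv ℝ (euclGrad S.V) (γ t) (deriv γ t) ⬝ᵥ deriv γ t
    set B := euclGrad S.V (γ t) ⬝ᵥ S.christoffelVec (γ t) (deriv γ t) (deriv γ t)
    have b3 : A - B ≤ (N * C3 + N * C2 * (N ^ 2 * C4)) * ‖deriv γ t‖ ^ 2 := by
      linarith [le_abs_self A, neg_abs_le B]
    have b4 : φ t ^ 2 * (A - B) ≤ K0 * φ t := by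
      calc φ t ^ 2 * (A - B)
          ≤ φ t ^ 2 * ((N * C3 + N * C2 * (N ^ 2 * C4)) * ‖deriv γ t‖ ^ 2) := by gcongr
        _ = (N * C3 + N * C2 * (N ^ 2 * C4)) * φ t * (φ t * ‖deriv γ t‖ ^ 2) := by ring
        _ ≤ (N * C3 + N * C2 * (N ^ 2 * C4)) * φ t * (2 * C1) := mul_le_mul_of_nonneg_left (hvel t ht) (by positivity)
        _ = K0 * φ t := by rw [hK0]; ring
    linarith
  choose! k' hk' hk'low using hexk
  have hc : 0 < m / 4 := by positivity
  have hlow : ∀ t ∈ Ioc 0 r, m / 4 ≤ φ t * k' t := fun t ht => by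
    obtain ⟨-, -, -, -, -, -, p7, p8⟩ := hP t (hIcc t ht)
    linarith [hk'low t ht]
  have hkc : ContinuousOn (S.kin γ) (Icc 0 r) := by
    intro t ht
    rcases ht.1.eq_or_lt with rfl | h
    · have hlim : Tendsto (fun t => √(Kh * φ t)) (𝓝[Icc 0 r] 0) (𝓝 0) := by
        have : Tendsto φ (𝓝[Icc 0 r] 0) (𝓝 (φ 0)) := hφc 0 ht
        rw [hφ0] at this
        simpa using (this.const_mul Kh).sqrt
      rw [ContinuousWithinAt, hkin0]
      refine squeeze_zero_norm' ?_ hlim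
      filter_upwards [self_mem_nhdsWithin] with u hu
      rcases hu.1.eq_or_lt with rfl | h'
      · simp [hkin0]
      · exact Real.abs_le_sqrt (hkinsq u ⟨h', hu.2⟩)
    · exact (hk' t ⟨h, ht.2⟩).continuousAt.continuousWithinAt
  have hk'pos : ∀ t ∈ Ioc 0 r, 0 ≤ k' t := fun t ht =>
    (pos_of_mul_pos_right (hc.trans_le (hlow t ht)) (hφpos t ht).le).le
  have hknn : ∀ t ∈ Icc 0 r, 0 ≤ S.kin γ t := fun t ht => by
    have := le_of_deriv_nonneg hkc (fun t ht => hk' t (hIoo t ht))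
      (fun t ht => hk'pos t (hIoo t ht)) t ht
    rwa [hkin0] at this
  have hen1 := energy_le_of_deriv (m := m / 4) (K := 0) hφc hkc (fun t ht => hφpos t (hIoo t ht))
    (fun t ht => hknn t (hIcc t (hIoo t ht))) (fun t ht => hφ' t (hIoo t ht))
    (fun t ht => hk' t (hIoo t ht)) hφ0 hkin0
    (fun t ht => by simpa using hlow t (hIoo t ht))
  have hkpos : ∀ t ∈ Ioc 0 r, 0 < S.kin γ t := fun t ht => by
    refine (hknn t (hIcc t ht)).lt_of_ne' fun h => ?_
    have := hen1 t (hIcc t ht)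
    have hp := mul_pos hc (hφpos t ht)
    rw [h] at this
    linarith
  set K1 := 4 * C1 / m + 1 with hK1
  have hK1pos : 0 < K1 := by positivity
  have hK1sq : 4 * C1 / m ≤ K1 ^ 2 := by
    have : 0 ≤ 4 * C1 / m := by positivity
    nlinarith
  have hvel' : ∀ t ∈ Ioc 0 r, ‖deriv γ t‖ ≤ K1 * (S.kin γ t / φ t) := fun t ht => by
    have hp := hφpos t ht
    have hkp := hkpos t ht
    refine le_of_sq_le_sq ?_ (by positivity)
    have h1 := hen1 t (hIcc t ht)
    have h2 : φ t ≤ 2 / m * S.kin γ t ^ 2 := by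
      rw [div_mul_eq_mul_div, le_div_iff₀ hm]
      linarith
    rw [mul_pow, div_pow, ← mul_div_assoc, le_div_iff₀ (by positivity)]
    calc ‖deriv γ t‖ ^ 2 * φ t ^ 2 = φ t * (φ t * ‖deriv γ t‖ ^ 2) := by ring
      _ ≤ φ t * (2 * C1) := mul_le_mul_of_nonneg_left (hvel t ht) (by positivity)
      _ ≤ 2 / m * S.kin γ t ^ 2 * (2 * C1) := by gcongr
      _ = 4 * C1 / m * S.kin γ t ^ 2 := by ring
      _ ≤ K1 ^ 2 * S.kin γ t ^ 2 := by gcongr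
  have hφnn : ∀ t ∈ Icc 0 r, 0 ≤ φ t := fun t ht => by
    rcases ht.1.eq_or_lt with rfl | h
    · exact hφ0.ge
    · exact (hφpos t ⟨h, ht.2⟩).le
  have hdist := norm_sub_le_of_deriv_le (K := K1) hγr (fun t ht => hd t (hIoo t ht)) hφc
    (fun t ht => hφ' t (hIoo t ht)) (fun t ht => hvel' t (hIoo t ht)) hφ0
    (fun t ht => mul_nonneg hK1pos.le (hφnn t ht))
  have hM : ∀ t ∈ Icc 0 r, |S.gradSq (γ t) - m| ≤ L1 * K1 * φ t := fun t ht => by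
    obtain ⟨-, -, -, -, p5, -⟩ := hP t ht
    refine p5.trans ?_
    rw [mul_assoc]
    gcongr
    exact hdist t ht
  have hen2 := energy_le_of_deriv (m := m) (K := L1 * K1 + K0) hφc hkc
    (fun t ht => hφpos t (hIoo t ht))
    (fun t ht => hknn t (hIcc t (hIoo t ht))) (fun t ht => hφ' t (hIoo t ht))
    (fun t ht => hk' t (hIoo t ht)) hφ0 hkin0 (fun t ht => by
      have := hk'low t (hIoo t ht)
      have := (abs_le.1 (hM t (hIcc t (hIoo t ht)))).1
      linarith)
  set K2 := 3 * (L1 * K1) + K0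
  have hL1K1 : 0 ≤ L1 * K1 := by positivity
  have hK2 : 0 ≤ K2 := by positivity
  set K := Kh + 2 * C1 + L2 * K1 + K2 + C1 + N ^ 2 * C4 with hK
  have q1 : 0 ≤ Kh := by positivity
  have q2 : 0 ≤ L2 * K1 := by positivity
  have q3 : 0 ≤ N ^ 2 * C4 := by positivity
  refine ⟨r, ⟨hr, hra⟩, m / 4, K, hc, by positivity, hkc, hkin0, fun t ht => ?_⟩
  obtain ⟨p1, p2, p3, p4, p5, p6, p7, p8⟩ := hP t (hIcc t ht)
  have hp := hφpos t ht
  refine ⟨hkpos t ht, (hkinsq t ht).trans ?_, (hvel t ht).trans ?_, p6.trans ?_, by linarith, ?_,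
    ⟨k' t, hk' t ht, hlow t ht⟩, fun v => (p1 v).trans ?_, fun v w =>
    (S.norm_christoffelVec_le hC4 p4 v w).trans ?_⟩
  · exact mul_le_mul_of_nonneg_right (by linarith) hp.le
  · linarith
  · calc L2 * ‖γ t - γ 0‖ ≤ L2 * (K1 * φ t) := by gcongr; exact hdist t (hIcc t ht)
      _ = L2 * K1 * φ t := by ring
      _ ≤ K * φ t := mul_le_mul_of_nonneg_right (by linarith) hp.le
  · have h1 := hen2 t (hIcc t ht)
    have h2 := (abs_le.1 (hM t (hIcc t ht))).2
    have h3 := mul_le_mul_of_nonneg_left h2 hp.le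
    calc 2 * φ t * S.gradSq (γ t) - S.kin γ t ^ 2 ≤ K2 * φ t ^ 2 := by
          simp only [K2]
          linarith
      _ ≤ K * φ t ^ 2 := mul_le_mul_of_nonneg_right (by linarith) (sq_nonneg _)
  · exact mul_le_mul_of_nonneg_right (by linarith)
      (S.prod_self_nonneg (hUr t (hIcc t ht)) v)
  · gcongr
    linarith

end Setting

lemma sq_add_le (x y : ℝ) : (x + y) ^ 2 ≤ 2 * x ^ 2 + 2 * y ^ 2 := by
  linarith [sq_nonneg (x - y)]

namespace Setting

variable (S : Setting N)

/-- The component of the velocity tangent to the level sets of `V` is controlled by the energy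
defect. -/
lemma prod_velocity_add_sq_le {x v ζ : Vec N} {φ h c K G : ℝ} (hx : x ∈ S.U) (hφ : 0 < φ)
    (hc : 0 < c) (hK : 0 ≤ K) (harc : (1/2) * S.prod x v v * φ = 1)
    (hh : h = -(φ * (euclGrad S.V x ⬝ᵥ v))) (hM : c ≤ S.gradSq x)
    (hdef : 2 * φ * S.gradSq x - h ^ 2 ≤ K * φ ^ 2) (hζ : S.prod x ζ ζ ≤ G) :
    (S.prod x v ζ + h / (φ * S.gradSq x) * S.prod x (S.grad x) ζ) ^ 2 ≤ K / c * G := by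
  have hMpos : 0 < S.gradSq x := hc.trans_le hM
  rw [← prod_add_smul_left]
  refine (S.prod_sq_le hx _ _).trans
    (mul_le_mul ?_ hζ (S.prod_self_nonneg hx _) (by positivity))
  rw [S.prod_add_smul_self hx, S.prod_comm hx v, S.prod_grad hx, S.prod_grad hx]
  have e1 : S.prod x v v = 2 / φ := by
    rw [eq_div_iff hφ.ne']
    linarith
  have e2 : euclGrad S.V x ⬝ᵥ v = -h / φ := by
    rw [eq_div_iff hφ.ne', hh]
    ring
  change S.gradSq x * _ + _ + _ ≤ _
  rw [e1, e2]
  calc _ = (2 * φ * S.gradSq x - h ^ 2) / (φ ^ 2 * S.gradSq x) := by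
        field_simp
        ring
    _ ≤ K * φ ^ 2 / (φ ^ 2 * S.gradSq x) := by gcongr
    _ = K / S.gradSq x := by field_simp
    _ ≤ K / c := by gcongr

end Setting

/-- **Lemma 4.12**: for `ξ ∈ Y_s^W`, `g(∇V(γ),ξ) g(γ̇,ξ) → 0` as `s → 0⁺`. -/
theorem xi_boundary_limit {N : ℕ} (S : Setting N) (γ : ℝ → Vec N) (a : ℝ)
    (hγ : S.IsBdryGeo γ a) (s : ℝ) (hs : s ∈ Ioc (0:ℝ) a)
    (W : Vec N) (ξ : ℝ → Vec N) (hξ : S.InY γ s W ξ) :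
    Tendsto (fun u => S.prod (γ u) (S.grad (γ u)) (ξ u)
        * S.prod (γ u) (deriv γ u) (ξ u))
      (nhdsWithin 0 (Ioi 0)) (nhds 0) := by
  obtain ⟨r, hr, c, K, hc, hK, hkc, hk0, hest⟩ := S.exists_geodesic_estimates hγ
  obtain ⟨ha, hcont, hC2, hV0, hVlt, hgeo, harc⟩ := hγ
  obtain ⟨⟨hξc, hξi, hξint⟩, hfin, htan, -⟩ := hξ
  have hU : ∀ t ∈ Icc 0 a, γ t ∈ S.U := fun t ht => S.mem_U_of_le <| by
    rcases ht.1.eq_or_lt with rfl | h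
    · exact hV0.le
    · exact (hVlt t ⟨h, ht.2⟩).le
  have h0U : γ 0 ∈ S.U := hU 0 ⟨le_rfl, ha.le⟩
  rw [S.prod_grad h0U] at htan
  set φ : ℝ → ℝ := fun t => S.E - S.V (γ t)
  obtain ⟨C, hC⟩ := isCompact_Icc.exists_bound_of_continuousOn hξc
  have hC0 : 0 ≤ C := (norm_nonneg _).trans (hC 0 ⟨le_rfl, hs.1.le⟩)
  have hγ0 : Tendsto γ (𝓝[>] 0) (𝓝 (γ 0)) := by
    have := (hcont 0 ⟨le_rfl, ha.le⟩).mono Ioc_subset_Icc_self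
    rwa [ContinuousWithinAt, nhdsWithin_Ioc_eq_nhdsGT ha] at this
  have hξ0 : Tendsto ξ (𝓝[>] 0) (𝓝 (ξ 0)) := by
    have := (hξc 0 ⟨le_rfl, hs.1.le⟩).mono Ioc_subset_Icc_self
    rwa [ContinuousWithinAt, nhdsWithin_Ioc_eq_nhdsGT hs.1] at this
  have hφ0 : Tendsto φ (𝓝[>] 0) (𝓝 0) := by
    have h1 : Tendsto (fun t => S.V (γ t)) (𝓝[>] 0) (𝓝 (S.V (γ 0))) :=
      (S.contDiffAt_V h0U).continuousAt.tendsto.comp hγ0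
    simpa [hV0] using h1.const_sub S.E
  have hkin0 : Tendsto (S.kin γ) (𝓝[>] 0) (𝓝 0) := by
    have := (hkc 0 ⟨le_rfl, hr.1.le⟩).mono Ioc_subset_Icc_self
    rwa [ContinuousWithinAt, nhdsWithin_Ioc_eq_nhdsGT hr.1, hk0] at this
  set f : ℝ → ℝ := fun t => euclGrad S.V (γ t) ⬝ᵥ ξ t
  have hf0 : Tendsto f (𝓝[>] 0) (𝓝 0) := by
    have h1 : Tendsto (fun t => euclGrad S.V (γ t)) (𝓝[>] 0) (𝓝 (euclGrad S.V (γ 0))) :=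
      (S.contDiffAt_euclGrad h0U).continuousAt.tendsto.comp hγ0
    have h2 : Tendsto f (𝓝[>] 0) (𝓝 (euclGrad S.V (γ 0) ⬝ᵥ ξ 0)) := tendsto_finsetSum _ fun i _ => (tendsto_pi_nhds.1 h1 i).mul (tendsto_pi_nhds.1 hξ0 i)
    rwa [htan] at h2
  have hG0 : Tendsto (fun t => S.prod (γ t) (ξ t) (ξ t)) (𝓝[>] 0)
      (𝓝 (S.prod (γ 0) (ξ 0) (ξ 0))) := by
    simp only [Setting.prod, gP]
    refine tendsto_finsetSum _ fun i _ => tendsto_finsetSum _ fun j _ => ?_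
    exact (((S.contDiffAt_g h0U i j).continuousAt.tendsto.comp hγ0).mul
      (tendsto_pi_nhds.1 hξ0 i)).mul (tendsto_pi_nhds.1 hξ0 j)
  set G := S.prod (γ 0) (ξ 0) (ξ 0) + 1
  set B : ℝ → ℝ := fun u => 2 * K * (φ u * S.prod (γ u) (S.covD γ (deriv γ) ξ (deriv ξ) u)
        (S.covD γ (deriv γ) ξ (deriv ξ) u)) + 2 * K ^ 2 * C ^ 2 * K with hB_def
  have hBi : IntegrableOn B (Icc 0 s) :=
    (hfin.const_mul _).add (integrableOn_const (by simp))
  set κ : ℝ → ℝ := fun t => ∫ u in (0:ℝ)..t, B u with hκ_def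
  have hκ0 : Tendsto κ (𝓝[>] 0) (𝓝 0) := by
    have h1 : ContinuousOn κ (uIcc 0 s) :=
      intervalIntegral.continuousOn_primitive_interval (by rwa [uIcc_of_le hs.1.le])
    rw [uIcc_of_le hs.1.le] at h1
    have := (h1 0 ⟨le_rfl, hs.1.le⟩).mono Ioc_subset_Icc_self
    rw [ContinuousWithinAt, nhdsWithin_Ioc_eq_nhdsGT hs.1] at this
    simpa [hκ_def] using this
  have hinc : ∀ t ∈ Ioc 0 (min r s), ‖ξ t - ξ 0‖ ^ 2 ≤ S.kin γ t / c * κ t := by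
    intro t ht
    have htr : t ≤ r := ht.2.trans (min_le_left _ _)
    have hts : t ≤ s := ht.2.trans (min_le_right _ _)
    have hsub : Ioc 0 t ⊆ Icc 0 s := fun x hx => ⟨hx.1.le, hx.2.trans hts⟩
    have hIr : ∀ x ∈ Ioo 0 t, x ∈ Ioc 0 r := fun x hx => ⟨hx.1, hx.2.le.trans htr⟩
    have hIa : ∀ x ∈ Ioo 0 t, x ∈ Ioc 0 a := fun x hx => ⟨hx.1, hx.2.le.trans (hts.trans hs.2)⟩
    have h1 : ‖ξ t - ξ 0‖ ≤ ∫ u in (0:ℝ)..t, ‖deriv ξ u‖ := by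
      rw [hξint t ⟨ht.1.le, hts⟩, add_sub_cancel_left]
      exact intervalIntegral.norm_integral_le_integral_norm ht.1.le
    refine (pow_le_pow_left₀ (norm_nonneg _) h1 2).trans ?_
    have hex : ∀ x ∈ Ioc 0 r, ∃ k', HasDerivAt (S.kin γ) k' x ∧ c ≤ φ x * k' :=
      fun x hx => (hest x hx).2.2.2.2.2.2.1
    choose! k' hk' hck' using hex
    refine sq_integral_le (φ := φ) (h' := k') ht.1 hc
      (hkc.mono (Icc_subset_Icc_right htr)) hk0 (hest t ⟨ht.1, htr⟩).1
      (fun x hx => hk' x (hIr x hx)) (fun x hx => sub_pos.2 (hVlt x (hIa x hx)))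
      (fun x hx => hck' x (hIr x hx)) (hξi.mono_set hsub).norm (fun _ => norm_nonneg _)
      (hBi.mono_set hsub) fun x hx => ?_
    obtain ⟨-, -, hvel, -, -, -, -, hcoer, hchr⟩ := hest x (hIr x hx)
    have hp : 0 < φ x := sub_pos.2 (hVlt x (hIa x hx))
    have hξx : ‖ξ x‖ ≤ C := hC x (hsub ⟨hx.1, hx.2.le⟩)
    set D := S.covD γ (deriv γ) ξ (deriv ξ) x with hD
    have e : deriv ξ x = D - S.christoffelVec (γ x) (deriv γ x) (ξ x) := by
      rw [hD, S.covD_eq, add_sub_cancel_right]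
    have b1 : ‖deriv ξ x‖ ≤ ‖D‖ + K * ‖deriv γ x‖ * C := by
      rw [e]
      refine (norm_sub_le _ _).trans (add_le_add_right ((hchr _ _).trans ?_) _)
      gcongr
    calc φ x * ‖deriv ξ x‖ ^ 2 ≤ φ x * (‖D‖ + K * ‖deriv γ x‖ * C) ^ 2 := by gcongr
      _ ≤ φ x * (2 * ‖D‖ ^ 2 + 2 * (K * ‖deriv γ x‖ * C) ^ 2) := by
          gcongr
          exact sq_add_le _ _
      _ = 2 * φ x * ‖D‖ ^ 2 + 2 * K ^ 2 * C ^ 2 * (φ x * ‖deriv γ x‖ ^ 2) := by ring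
      _ ≤ 2 * φ x * (K * S.prod (γ x) D D) + 2 * K ^ 2 * C ^ 2 * K :=
          add_le_add (mul_le_mul_of_nonneg_left (hcoer D) (by positivity))
            (mul_le_mul_of_nonneg_left hvel (by positivity))
      _ = B x := by
          simp only [hB_def, ← hD]
          ring
  set n0 := ‖euclGrad S.V (γ 0)‖
  set A1 := 2 * (N * K * C) ^ 2 with hA1
  set A2 := 2 * (N * n0) ^ 2 / c with hA2
  have hA1nn : 0 ≤ A1 := by positivity
  have hA2nn : 0 ≤ A2 := by positivity
  have hlim : Tendsto (fun t => |f t| * √(K / c * G) +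
      (A1 * (φ t * S.kin γ t) + A2 * K * |κ t|) / c) (𝓝[>] 0) (𝓝 0) := by
    have := (hf0.abs.mul_const √(K / c * G)).add
      ((((hφ0.mul hkin0).const_mul A1).add (hκ0.abs.const_mul (A2 * K))).div_const c)
    simpa using this
  refine squeeze_zero_norm' ?_ hlim
  have hrs : 0 < min r s := lt_min hr.1 hs.1
  filter_upwards [Ioc_mem_nhdsGT hrs, hG0.eventually_lt_const (lt_add_one _)] with t ht hGt
  have htr : t ∈ Ioc 0 r := ⟨ht.1, ht.2.trans (min_le_left _ _)⟩
  have hts : t ∈ Icc 0 s := ⟨ht.1.le, ht.2.trans (min_le_right _ _)⟩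
  have hta : t ∈ Ioc 0 a := ⟨ht.1, hts.2.trans hs.2⟩
  have hUt : γ t ∈ S.U := hU t ⟨ht.1.le, hta.2⟩
  obtain ⟨hkpos, hksq, -, hgrad, hM, hdef, -, -, -⟩ := hest t htr
  have hp : 0 < φ t := sub_pos.2 (hVlt t hta)
  have hMpos : 0 < S.gradSq (γ t) := hc.trans_le hM
  have hT := S.prod_velocity_add_sq_le (ζ := ξ t) hUt hp hc hK (harc t hta) rfl hM hdef hGt.le
  rw [S.prod_grad hUt] at hT ⊢
  change (S.prod (γ t) (deriv γ t) (ξ t) + S.kin γ t / (φ t * S.gradSq (γ t)) * f t) ^ 2 ≤ _ at hT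
  change ‖f t * _‖ ≤ _
  have hT' := Real.abs_le_sqrt hT
  set p := S.prod (γ t) (deriv γ t) (ξ t)
  set h := S.kin γ t
  have hfsq : f t ^ 2 ≤ A1 * φ t ^ 2 + A2 * h * |κ t| := by
    have e : f t = (euclGrad S.V (γ t) - euclGrad S.V (γ 0)) ⬝ᵥ ξ t +
        euclGrad S.V (γ 0) ⬝ᵥ (ξ t - ξ 0) := by
      rw [sub_dotProduct, dotProduct_sub, htan]
      ring
    have b1 : |(euclGrad S.V (γ t) - euclGrad S.V (γ 0)) ⬝ᵥ ξ t| ≤ N * (K * φ t) * C := by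
      refine (abs_dotProduct_le _ _).trans ?_
      gcongr
      exact hC t hts
    have b2 := abs_dotProduct_le (euclGrad S.V (γ 0)) (ξ t - ξ 0)
    have b3 := pow_le_pow_left₀ (abs_nonneg _) b1 2
    have b4 := pow_le_pow_left₀ (abs_nonneg _) b2 2
    rw [sq_abs] at b3 b4
    have b5 : ‖ξ t - ξ 0‖ ^ 2 ≤ h / c * |κ t| := (hinc t ht).trans (by
      gcongr
      exact le_abs_self _)
    calc f t ^ 2 ≤ 2 * (N * (K * φ t) * C) ^ 2 + 2 * (N * n0 * ‖ξ t - ξ 0‖) ^ 2 := by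
          rw [e]
          exact (sq_add_le _ _).trans (by linarith)
      _ = A1 * φ t ^ 2 + 2 * (N * n0) ^ 2 * ‖ξ t - ξ 0‖ ^ 2 := by rw [hA1]; ring
      _ ≤ A1 * φ t ^ 2 + 2 * (N * n0) ^ 2 * (h / c * |κ t|) := by gcongr
      _ = A1 * φ t ^ 2 + A2 * h * |κ t| := by rw [hA2]; ring
  have hmain : h / (φ t * S.gradSq (γ t)) * f t ^ 2 ≤ (A1 * (φ t * h) + A2 * K * |κ t|) / c := by
    calc h / (φ t * S.gradSq (γ t)) * f t ^ 2
        ≤ h / (φ t * c) * (A1 * φ t ^ 2 + A2 * h * |κ t|) := by gcongr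
      _ = (A1 * (φ t * h) + A2 * (h ^ 2 / φ t) * |κ t|) / c := by
          field_simp
      _ ≤ (A1 * (φ t * h) + A2 * K * |κ t|) / c := by
          gcongr
          rwa [div_le_iff₀ hp]
  have e : f t * p = f t * (p + h / (φ t * S.gradSq (γ t)) * f t) -
      h / (φ t * S.gradSq (γ t)) * f t ^ 2 := by ring
  rw [e]
  refine (norm_sub_le _ _).trans (add_le_add ?_ ?_)
  · rw [norm_mul]
    exact mul_le_mul_of_nonneg_left hT' (abs_nonneg _)
  · rw [Real.norm_of_nonneg (by positivity)]
    exact hmain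

end
end JacobiPaper
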